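/- Symmetrized relative entropy formula: There exists a constant C > 0 depending only on A_V and the Lipschitz constant L of V'' such that the following holds. Let F ⊆ ℤ² be finite, let ζ, ζ̃ : ∂F → ℝ, and let g : F ∪ ∂F → ℝ satisfy g = ζ − ζ̃ on ∂F. Let Q denote the pushforward of the GL measure P_F^ζ under the map h ↦ h − g|_F. Then for every coupling μ of (P_F^ζ, P_F^ζ̃), writing h̄ = (h^ζ ∨ ζ) − (h^ζ̃ ∨ ζ̃), one has | KL(P_F^ζ̃ ‖ Q) + KL(Q ‖ P_F^ζ̃) − Σ_{b∈F*} E_μ[ V''(∇(h^ζ∨ζ)(b)) · ∇g(b) · ∇(g − h̄)(b) ] | ≤ C Σ_{b∈F*} E_μ[ (|∇h̄(b)|² + |∇g(b)|²) |∇g(b)| ], where KL denotes the Kullback–Leibler divergence (relative entropy). -/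

import Mathlib

/-!
`Q` is itself a Gibbs measure, with energy `h ↦ H_ζ(h + g)`. In the symmetrized relative entropy of
two Gibbs measures the normalizing constants cancel, and only expectations of energy differences
remain. Under a coupling, write `η` and `ηt` for the gradients of the two fields on an edge `b`, and
`a = ∇g(b)`. The differences sum to `∑_b E[(V(ηt + a) - V(ηt)) - (V(η) - V(η - a))]`. By the mean
value theorem the integrand is `(V'(ηt + s a) - V'(η - a + s a)) a` for some `s ∈ (0, 1)`; both
arguments are within `|η - ηt| + |a|` of `η`, and they differ by `a - (η - ηt)`. Since `V''` is
Lipschitz, this is `V''(η) a (a - (η - ηt))` up to `L (|η - ηt| + |a|)² |a|`.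

For the expectations to be finite, note that `V` grows at most cubically since `V''` is Lipschitz.
A linear lower bound on `V`, combined with a discrete `L¹` Poincaré inequality, gives the Gibbs
measures exponential tails, so the gradients have moments of all orders.
-/

open MeasureTheory ProbabilityTheory Real
open scoped ENNReal NNReal Classical

noncomputable section

abbrev Z2 := ℤ × ℤ

/-- Nearest-neighbor adjacency in `ℤ²` (Euclidean distance one). -/
def adjZ (x y : Z2) : Prop := (x.1 - y.1) ^ 2 + (x.2 - y.2) ^ 2 = 1

/-- Exterior vertex boundary `∂D` of a set `D ⊆ ℤ²`. -/
def bdry (D : Set Z2) : Set Z2 := {x | x ∉ D ∧ ∃ y ∈ D, adjZ x y}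

/-- Euclidean distance on `ℤ²`. -/
def edist2 (x y : Z2) : ℝ :=
  Real.sqrt (((x.1 : ℝ) - (y.1 : ℝ)) ^ 2 + ((x.2 : ℝ) - (y.2 : ℝ)) ^ 2)

/-- Euclidean distance from a point to a set. -/
def distToSet (x : Z2) (S : Set Z2) : ℝ := sInf (edist2 x '' S)

/-- Euclidean diameter of a set in `ℤ²`. -/
def diamZ (D : Set Z2) : ℝ := sSup {d : ℝ | ∃ x ∈ D, ∃ y ∈ D, d = edist2 x y}

/-- Discrete Euclidean ball. -/
def ballZ (y : Z2) (r : ℝ) : Set Z2 := {z | edist2 z y ≤ r}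

/-- Positively oriented nearest-neighbor edges with at least one endpoint in `D`. -/
def edgesOf (D : Set Z2) : Set (Z2 × Z2) :=
  {b | (b.2 = b.1 + ((1, 0) : Z2) ∨ b.2 = b.1 + ((0, 1) : Z2)) ∧ (b.1 ∈ D ∨ b.2 ∈ D)}

/-- Positively oriented nearest-neighbor edges with both endpoints in `D`. -/
def intEdges (D : Set Z2) : Set (Z2 × Z2) :=
  {b | (b.2 = b.1 + ((1, 0) : Z2) ∨ b.2 = b.1 + ((0, 1) : Z2)) ∧ b.1 ∈ D ∧ b.2 ∈ D}

/-- Edges with one endpoint in `D` and the other in `∂D`. -/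
def bdEdges (D : Set Z2) : Set (Z2 × Z2) :=
  {b | (b.2 = b.1 + ((1, 0) : Z2) ∨ b.2 = b.1 + ((0, 1) : Z2)) ∧
    ((b.1 ∈ D ∧ b.2 ∈ bdry D) ∨ (b.1 ∈ bdry D ∧ b.2 ∈ D))}

/-- The endpoint of an edge lying outside `D` (for boundary edges). -/
def bEnd (D : Set Z2) (b : Z2 × Z2) : Z2 := if b.1 ∈ D then b.2 else b.1

/-- Discrete gradient of `f` across the oriented edge `b`. -/
def grad (f : Z2 → ℝ) (b : Z2 × Z2) : ℝ := f b.2 - f b.1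

/-- `D ⊆ ℤ²` is connected (as an induced subgraph of the nearest-neighbor lattice). -/
def DiscConnected (D : Set Z2) : Prop :=
  D.Nonempty ∧ ∀ x ∈ D, ∀ y ∈ D, ∃ (n : ℕ) (p : ℕ → Z2),
    p 0 = x ∧ p n = y ∧ (∀ i ≤ n, p i ∈ D) ∧ ∀ i < n, adjZ (p i) (p (i + 1))

/-- `h ∨ φ`: the field `h` on `D` extended by the boundary condition `φ` off `D`. -/
def vee (D : Finset Z2) (h : ↥D → ℝ) (φ : Z2 → ℝ) : Z2 → ℝ :=
  fun x => if hx : x ∈ D then h ⟨x, hx⟩ else φ x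

/-- Ginzburg–Landau Hamiltonian `∑_{b ∈ D*} V(∇(h∨φ)(b))`. -/
def glEnergy (V : ℝ → ℝ) (D : Finset Z2) (φ : Z2 → ℝ) (h : ↥D → ℝ) : ℝ :=
  ∑ᶠ b ∈ edgesOf (D : Set Z2), V (grad (vee D h φ) b)

/-- Unnormalized GL measure: density `exp(−H)` w.r.t. Lebesgue measure on `ℝ^D`. -/
def glFree (V : ℝ → ℝ) (D : Finset Z2) (φ : Z2 → ℝ) : Measure (↥D → ℝ) :=
  volume.withDensity fun h => ENNReal.ofReal (Real.exp (-(glEnergy V D φ h)))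

/-- `P` is the GL measure on `D` with potential `V` and boundary condition `φ`:
a probability measure proportional to `exp(−H) dh`. -/
def IsGL (V : ℝ → ℝ) (D : Finset Z2) (φ : Z2 → ℝ) (P : Measure (↥D → ℝ)) : Prop :=
  IsProbabilityMeasure P ∧ ∃ c : ℝ≥0∞, c ≠ 0 ∧ c ≠ ⊤ ∧ P = c • glFree V D φ

/-- `μ` is a coupling of `P` and `Q`. -/
def IsCoupling {α : Type*} [MeasurableSpace α] (μ : Measure (α × α)) (P Q : Measure α) : Prop :=
  IsProbabilityMeasure μ ∧ μ.map Prod.fst = P ∧ μ.map Prod.snd = Q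

/-- `f` is discrete-harmonic at `x`: the sum of the increments to the four neighbors vanishes. -/
def DiscHarmAt (f : Z2 → ℝ) (x : Z2) : Prop :=
  f (x + ((1, 0) : Z2)) + f (x - ((1, 0) : Z2)) + f (x + ((0, 1) : Z2)) + f (x - ((0, 1) : Z2))
    - 4 * f x = 0

/-- `D(r) = {x ∈ D : dist(x, ∂D) ≥ r}`. -/
def innerSet (D : Finset Z2) (r : ℝ) : Set Z2 :=
  {x | x ∈ D ∧ r ≤ distToSet x (bdry (D : Set Z2))}


/-- Kullback–Leibler divergence (relative entropy) `E_μ[log dμ/dν]`, via the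
Radon–Nikodym derivative. -/
def KLr {Ω : Type*} [MeasurableSpace Ω] (μ ν : Measure Ω) : ℝ :=
  ∫ ω, Real.log ((μ.rnDeriv ν ω).toReal) ∂μ

section Calculus

open Asymptotics

variable {E : Type*} [NormedAddCommGroup E] [NormedSpace ℝ E]

lemma norm_sub_sub_smul_deriv_le {f : ℝ → E} {L : ℝ≥0} (hf : Differentiable ℝ f)
    (hL : LipschitzWith L (deriv f)) {x R u w : ℝ} (hu : |u - x| ≤ R) (hw : |w - x| ≤ R) :
    ‖f u - f w - (u - w) • deriv f x‖ ≤ L * R * |u - w| := by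
  have hderiv : ∀ z ∈ Metric.closedBall x R, HasDerivWithinAt (fun z => f z - z • deriv f x)
      (deriv f z - (1 : ℝ) • deriv f x) (Metric.closedBall x R) z := fun z _ =>
    ((hf z).hasDerivAt.sub ((hasDerivAt_id z).smul_const _)).hasDerivWithinAt
  have hbound : ∀ z ∈ Metric.closedBall x R, ‖deriv f z - (1 : ℝ) • deriv f x‖ ≤ L * R := by
    intro z hz
    rw [one_smul, ← dist_eq_norm]
    exact hL.dist_le_mul_of_le hz
  have hmean := (convex_closedBall x R).norm_image_sub_le_of_norm_hasDerivWithin_le hderiv hbound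
    (Metric.mem_closedBall.2 hw) (Metric.mem_closedBall.2 hu)
  rwa [sub_sub_sub_comm, ← sub_smul] at hmean

lemma exists_fourPoint_eq_deriv_sub_mul {f : ℝ → ℝ} (hf : Differentiable ℝ f) (x y a : ℝ) :
    ∃ s ∈ Set.Ioo (0 : ℝ) 1, (f (y + a) - f y) - (f x - f (x - a))
      = (deriv f (y + s * a) - deriv f (x - a + s * a)) * a := by
  have hderiv : ∀ c s : ℝ, HasDerivAt (fun s => f (c + s * a)) (deriv f (c + s * a) * a) s :=
    fun c s => (hf _).hasDerivAt.comp s ((hasDerivAt_mul_const a).const_add c)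
  have hsub : ∀ s : ℝ, HasDerivAt (fun s => f (y + s * a) - f (x - a + s * a))
      (deriv f (y + s * a) * a - deriv f (x - a + s * a) * a) s :=
    fun s => (hderiv y s).sub (hderiv (x - a) s)
  obtain ⟨s, hs, hslope⟩ := exists_hasDerivAt_eq_slope _ _ zero_lt_one
    (HasDerivAt.continuousOn fun s _ => hsub s) fun s _ => hsub s
  refine ⟨s, hs, ?_⟩
  simp only [one_mul, zero_mul, add_zero, sub_add_cancel, sub_zero, div_one] at hslope
  linear_combination -hslope

lemma abs_fourPoint_sub_le {V : ℝ → ℝ} {L : ℝ≥0} (hV : ContDiff ℝ 2 V)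
    (hL : LipschitzWith L (deriv (deriv V))) (x y a : ℝ) :
    |(V (y + a) - V y) - (V x - V (x - a)) - deriv (deriv V) x * a * (a - (x - y))|
      ≤ 2 * L * ((|x - y| ^ 2 + |a| ^ 2) * |a|) := by
  obtain ⟨s, ⟨hs0, hs1⟩, hs⟩ :=
    exists_fourPoint_eq_deriv_sub_mul (hV.differentiable two_ne_zero) x y a
  set u := y + s * a
  set w := x - a + s * a
  set R := |x - y| + |a|
  have huw : u - w = a - (x - y) := by ring
  have hu : |u - x| ≤ R := by
    rw [show u - x = s * a - (x - y) by ring]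
    have hsa : |s * a| ≤ |a| := by
      rw [abs_mul, abs_of_pos hs0]
      exact mul_le_of_le_one_left (abs_nonneg a) hs1.le
    linarith [abs_sub (s * a) (x - y)]
  have hw : |w - x| ≤ R := by
    rw [show w - x = (s - 1) * a by ring, abs_mul]
    have hs' : |s - 1| ≤ 1 := abs_le.2 ⟨by linarith, by linarith⟩
    linarith [mul_le_of_le_one_left (abs_nonneg a) hs', abs_nonneg (x - y)]
  have huw_le : |u - w| ≤ R := by
    rw [huw]
    linarith [abs_sub a (x - y)]
  calc |(V (y + a) - V y) - (V x - V (x - a)) - deriv (deriv V) x * a * (a - (x - y))|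
      = |deriv V u - deriv V w - (u - w) * deriv (deriv V) x| * |a| := by
        rw [← abs_mul, hs, huw]
        ring_nf
    _ ≤ L * R * |u - w| * |a| := by
        gcongr
        exact norm_sub_sub_smul_deriv_le hV.differentiable_deriv_two hL hu hw
    _ ≤ L * R * R * |a| := by gcongr
    _ = L * R ^ 2 * |a| := by ring
    _ ≤ L * (2 * (|x - y| ^ 2 + |a| ^ 2)) * |a| := by
        gcongr
        exact add_sq_le
    _ = 2 * L * ((|x - y| ^ 2 + |a| ^ 2) * |a|) := by ring

lemma isBigO_top_one_add_abs_pow_succ_of_deriv {f : ℝ → E} {n : ℕ} (hf : Differentiable ℝ f)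
    (hf' : deriv f =O[⊤] fun x => (1 + |x|) ^ n) : f =O[⊤] fun x => (1 + |x|) ^ (n + 1) := by
  obtain ⟨C, hC, hbound⟩ := hf'.exists_nonneg
  rw [isBigOWith_top] at hbound
  refine isBigO_top.2 ⟨‖f 0‖ + C, fun x => ?_⟩
  have hderiv : ∀ z ∈ Metric.closedBall (0 : ℝ) |x|, ‖deriv f z‖ ≤ C * (1 + |x|) ^ n := by
    intro z hz
    rw [mem_closedBall_zero_iff, Real.norm_eq_abs] at hz
    refine (hbound z).trans ?_
    rw [Real.norm_of_nonneg (by positivity)]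
    gcongr
  have hmean := (convex_closedBall (0 : ℝ) |x|).norm_image_sub_le_of_norm_deriv_le
    (fun z _ => hf z) hderiv (Metric.mem_closedBall_self (abs_nonneg x))
    (mem_closedBall_zero_iff.2 le_rfl)
  rw [sub_zero, Real.norm_eq_abs] at hmean
  rw [Real.norm_of_nonneg (by positivity)]
  calc ‖f x‖ ≤ ‖f 0‖ + C * (1 + |x|) ^ n * |x| := by
        linarith [norm_le_norm_add_norm_sub' (f x) (f 0)]
    _ ≤ ‖f 0‖ * (1 + |x|) ^ (n + 1) + C * (1 + |x|) ^ n * (1 + |x|) := by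
        gcongr
        · exact le_mul_of_one_le_right (norm_nonneg _)
            (one_le_pow₀ (le_add_of_nonneg_right (abs_nonneg x)))
        · exact le_add_of_nonneg_left zero_le_one
    _ = (‖f 0‖ + C) * (1 + |x|) ^ (n + 1) := by ring

lemma isBigO_top_one_add_abs_pow_three {V : ℝ → ℝ} {L : ℝ≥0} (hV : ContDiff ℝ 2 V)
    (hL : LipschitzWith L (deriv (deriv V))) : V =O[⊤] fun x => (1 + |x|) ^ 3 := by
  refine isBigO_top_one_add_abs_pow_succ_of_deriv (hV.differentiable two_ne_zero)
    (isBigO_top_one_add_abs_pow_succ_of_deriv hV.differentiable_deriv_two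
      (isBigO_top.2 ⟨|deriv (deriv V) 0| + L, fun x => ?_⟩))
  have hdist := hL.dist_le_mul x 0
  rw [Real.dist_eq, Real.dist_eq, sub_zero] at hdist
  rw [pow_one, Real.norm_of_nonneg (by positivity : 0 ≤ 1 + |x|), Real.norm_eq_abs]
  linarith [abs_sub_abs_le_abs_sub (deriv (deriv V) x) (deriv (deriv V) 0), L.coe_nonneg,
    mul_nonneg (abs_nonneg (deriv (deriv V) 0)) (abs_nonneg x)]

lemma add_deriv_mul_le_of_convexOn {f : ℝ → ℝ} {x : ℝ} (hf : ConvexOn ℝ Set.univ f)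
    (hx : DifferentiableAt ℝ f x) (y : ℝ) : f x + deriv f x * (y - x) ≤ f y := by
  rcases lt_trichotomy x y with hxy | rfl | hyx
  · have hslope := hf.deriv_le_slope (Set.mem_univ x) (Set.mem_univ y) hxy hx
    rw [slope_def_field, le_div_iff₀ (sub_pos.2 hxy)] at hslope
    linarith
  · simp
  · have hslope := hf.slope_le_deriv (Set.mem_univ y) (Set.mem_univ x) hyx hx
    rw [slope_def_field, div_le_iff₀ (sub_pos.2 hyx)] at hslope
    linarith

lemma exists_forall_mul_abs_sub_le_of_le_deriv2 {V : ℝ → ℝ} {m : ℝ} (hm : 0 < m)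
    (hV : ContDiff ℝ 2 V) (hV'' : ∀ x, m ≤ deriv (deriv V) x) (a : ℝ) :
    ∃ K, ∀ x, a * |x| - K ≤ V x := by
  have hdV := hV.differentiable two_ne_zero
  have hdV' := hV.differentiable_deriv_two
  have hderiv : ∀ z, HasDerivAt (fun z => V z - m / 2 * z ^ 2) (deriv V z - m * z) z := fun z =>
    ((hdV z).hasDerivAt.sub ((hasDerivAt_pow 2 z).const_mul (m / 2))).congr_deriv (by simp; ring)
  have hmono : Monotone fun z => deriv V z - m * z :=
    monotone_of_hasDerivAt_nonneg
      (fun z => (hdV' z).hasDerivAt.sub ((hasDerivAt_id z).const_mul m))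
      (fun z => by simpa using hV'' z)
  have hconvex : ConvexOn ℝ Set.univ fun z => V z - m / 2 * z ^ 2 :=
    Monotone.convexOn_univ_of_deriv (fun z => (hderiv z).differentiableAt)
      (by rwa [funext fun z => (hderiv z).deriv])
  refine ⟨(a + |deriv V 0|) ^ 2 / (2 * m) - V 0, fun x => ?_⟩
  have htangent := add_deriv_mul_le_of_convexOn hconvex (hderiv 0).differentiableAt x
  have habs : -(|deriv V 0| * |x|) ≤ deriv V 0 * x := by
    rw [← abs_mul]
    exact neg_abs_le _
  have hsquare : (a + |deriv V 0|) * |x| ≤ (a + |deriv V 0|) ^ 2 / (2 * m) + m / 2 * x ^ 2 := by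
    rw [← sq_abs x, ← sub_nonneg]
    have : (a + |deriv V 0|) ^ 2 / (2 * m) + m / 2 * |x| ^ 2 - (a + |deriv V 0|) * |x|
        = (a + |deriv V 0| - m * |x|) ^ 2 / (2 * m) := by
      field_simp
      ring
    rw [this]
    positivity
  rw [(hderiv 0).deriv] at htangent
  linarith

end Calculus

section Tilted

lemma eq_tilted_of_eq_smul_withDensity {Ω : Type*} [MeasurableSpace Ω] {ν P : Measure Ω}
    [IsProbabilityMeasure P] {f : Ω → ℝ} (hf : Integrable (fun ω => exp (f ω)) ν) {c : ℝ≥0∞}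
    (hP : P = c • ν.withDensity fun ω => ENNReal.ofReal (exp (f ω))) : P = ν.tilted f := by
  have hmass : c * ENNReal.ofReal (∫ ω, exp (f ω) ∂ν) = 1 := by
    rw [ofReal_integral_eq_lintegral_ofReal hf (ae_of_all _ fun ω => (exp_pos _).le),
      ← setLIntegral_univ, ← withDensity_apply _ MeasurableSet.univ, ← smul_eq_mul,
      ← Measure.smul_apply, ← hP, measure_univ]
  have hpos : 0 < ∫ ω, exp (f ω) ∂ν :=
    ENNReal.ofReal_pos.1 (pos_iff_ne_zero.2 (right_ne_zero_of_mul_eq_one hmass))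
  rw [hP, Measure.tilted, ← withDensity_smul' _ _ (by
    rw [ENNReal.eq_inv_of_mul_eq_one_left hmass]
    exact ENNReal.inv_ne_top.2 (ENNReal.ofReal_pos.2 hpos).ne')]
  congr 1 with ω
  rw [ENNReal.ofReal_div_of_pos hpos, Pi.smul_apply, smul_eq_mul,
    ENNReal.eq_inv_of_mul_eq_one_left hmass, ENNReal.div_eq_inv_mul]

lemma map_sub_right_tilted {G : Type*} [MeasurableSpace G] [AddGroup G] [MeasurableAdd G]
    [MeasurableSub G] (ν : Measure G) [ν.IsAddRightInvariant] (f : G → ℝ) (v : G) :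
    (ν.tilted f).map (· - v) = ν.tilted fun x => f (x + v) := by
  have hv : Measurable fun x : G => x - v := measurable_id.sub_const v
  ext s hs
  rw [Measure.map_apply hv hs, tilted_apply' _ _ (hv hs), tilted_apply' _ _ hs,
    ← lintegral_indicator (hv hs), ← lintegral_indicator hs, ← lintegral_add_right_eq_self _ v,
    integral_add_right_eq_self (fun x => exp (f x)) v]
  simp only [Set.indicator, Set.mem_preimage, add_sub_cancel_right]

lemma KLr_tilted_add_KLr_tilted_right {Ω : Type*} [MeasurableSpace Ω] {Q : Measure Ω}
    [IsProbabilityMeasure Q] {f : Ω → ℝ} (hexp : Integrable (fun ω => exp (f ω)) Q)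
    (hQ : Integrable f Q) (hf : Integrable f (Q.tilted f)) :
    KLr (Q.tilted f) Q + KLr Q (Q.tilted f) = ∫ ω, f ω ∂(Q.tilted f) - ∫ ω, f ω ∂Q := by
  have : IsProbabilityMeasure (Q.tilted f) := isProbabilityMeasure_tilted hexp
  have hleft : KLr (Q.tilted f) Q = ∫ ω, f ω ∂(Q.tilted f) - log (∫ ω, exp (f ω) ∂Q) := by
    rw [KLr, integral_congr_ae ((tilted_absolutelyContinuous Q f).ae_le
      (log_rnDeriv_tilted_left_self hexp)), integral_sub hf (integrable_const _)]
    simp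
  have hright : KLr Q (Q.tilted f) = log (∫ ω, exp (f ω) ∂Q) - ∫ ω, f ω ∂Q := by
    refine (integral_llr_tilted_right Measure.AbsolutelyContinuous.rfl hQ hexp
      ((integrable_zero _ _ _).congr (llr_self Q).symm)).trans ?_
    rw [integral_congr_ae (llr_self Q)]
    simp only [Pi.zero_apply, integral_zero]
    ring
  rw [hleft, hright]
  ring

lemma KLr_tilted_add_KLr_tilted {Ω : Type*} [MeasurableSpace Ω] {ν : Measure Ω} [NeZero ν]
    {f f' : Ω → ℝ} (hf : Integrable (fun ω => exp (f ω)) ν)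
    (hf' : Integrable (fun ω => exp (f' ω)) ν)
    (hint : Integrable (fun ω => f ω - f' ω) (ν.tilted f))
    (hint' : Integrable (fun ω => f ω - f' ω) (ν.tilted f')) :
    KLr (ν.tilted f) (ν.tilted f') + KLr (ν.tilted f') (ν.tilted f)
      = ∫ ω, (f ω - f' ω) ∂(ν.tilted f) - ∫ ω, (f ω - f' ω) ∂(ν.tilted f') := by
  have : IsProbabilityMeasure (ν.tilted f') := isProbabilityMeasure_tilted hf'
  have htilt : ν.tilted f = (ν.tilted f').tilted fun ω => f ω - f' ω := by
    rw [tilted_tilted hf']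
    congr 1 with ω
    simp
  have hexp : Integrable (fun ω => exp (f ω - f' ω)) (ν.tilted f') := by
    rw [integrable_tilted_iff hf']
    simpa only [smul_eq_mul, ← exp_add, add_sub_cancel] using hf
  rw [htilt] at hint ⊢
  exact KLr_tilted_add_KLr_tilted_right hexp hint' hint

lemma KLr_add_KLr_map_sub_right_tilted {G : Type*} [MeasurableSpace G] [AddGroup G]
    [MeasurableAdd G] [MeasurableSub G] {ν : Measure G} [ν.IsAddRightInvariant] [NeZero ν]
    {H H' : G → ℝ} (hexp : Integrable (fun x => exp (-H x)) ν)
    (hexp' : Integrable (fun x => exp (-H' x)) ν) (v : G)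
    (hint : Integrable (fun x => H x - H' (x - v)) (ν.tilted fun x => -H x))
    (hint' : Integrable (fun x => H (x + v) - H' x) (ν.tilted fun x => -H' x)) :
    KLr (ν.tilted fun x => -H' x) ((ν.tilted fun x => -H x).map (· - v))
        + KLr ((ν.tilted fun x => -H x).map (· - v)) (ν.tilted fun x => -H' x)
      = ∫ x, (H (x + v) - H' x) ∂(ν.tilted fun x => -H' x)
        - ∫ x, (H x - H' (x - v)) ∂(ν.tilted fun x => -H x) := by
  have hv : MeasurableEmbedding fun x : G => x - v :=
    (MeasurableEquiv.subRight v).measurableEmbedding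
  have hmap := map_sub_right_tilted ν (fun x => -H x) v
  have hcomp : (fun x => H x - H' (x - v)) = (fun x => H (x + v) - H' x) ∘ (· - v) := by
    ext x
    simp
  rw [hcomp, ← hv.integrable_map_iff, hmap] at hint
  have hneg : ∀ x, -H' x - -H (x + v) = H (x + v) - H' x := fun x => neg_sub_neg _ _
  simp only [← hneg] at hint hint'
  rw [hmap, KLr_tilted_add_KLr_tilted hexp' (hexp.comp_add_right v) hint' hint, ← hmap,
    hv.integral_map]
  simp only [sub_add_cancel, neg_sub_neg]

end Tilted

section Moments

variable {ι : Type*} [Fintype ι]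

lemma integrable_exp_neg_mul_abs {s : ℝ} (hs : 0 < s) : Integrable fun x : ℝ => exp (-s * |x|) := by
  rw [← integrableOn_univ, ← Set.Iic_union_Ioi (a := (0 : ℝ)), integrableOn_union]
  constructor
  · refine (integrableOn_exp_mul_Iic hs 0).congr_fun (fun x hx => ?_) measurableSet_Iic
    simp only [abs_of_nonpos (Set.mem_Iic.1 hx), neg_mul_neg]
  · refine (integrableOn_exp_mul_Ioi (neg_lt_zero.2 hs) 0).congr_fun (fun x hx => ?_)
      measurableSet_Ioi
    simp only [abs_of_pos (Set.mem_Ioi.1 hx)]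

lemma integrable_exp_of_le_sub_mul_sum_abs {f : (ι → ℝ) → ℝ} (hf : Measurable f) {s K : ℝ}
    (hs : 0 < s) (hle : ∀ h, f h ≤ K - s * ∑ i, |h i|) : Integrable fun h => exp (f h) := by
  have hprod : Integrable fun h : ι → ℝ => ∏ i, exp (-s * |h i|) :=
    Integrable.fintype_prod fun _ => integrable_exp_neg_mul_abs hs
  refine (hprod.const_mul (exp K)).mono' (by fun_prop) (ae_of_all _ fun h => ?_)
  rw [Real.norm_of_nonneg (exp_pos _).le, ← exp_sum, ← exp_add, ← Finset.mul_sum]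
  exact exp_le_exp.2 ((hle h).trans_eq (by ring))

lemma memLp_eval_tilted {f : (ι → ℝ) → ℝ} (hf : Measurable f) {s K : ℝ} (hs : 0 < s)
    (hle : ∀ h, f h ≤ K - s * ∑ i, |h i|) (i : ι) (p : ℝ≥0) :
    MemLp (fun h : ι → ℝ => h i) p ((volume : Measure (ι → ℝ)).tilted f) := by
  refine memLp_of_mem_interior_integrableExpSet
    (mem_interior.2 ⟨Set.Ioo (-s) s, fun t ht => ?_, isOpen_Ioo, neg_lt_zero.2 hs, hs⟩) p
  change Integrable (fun h : ι → ℝ => exp (t * h i)) _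
  rw [integrable_tilted_iff (integrable_exp_of_le_sub_mul_sum_abs hf hs hle)]
  simp only [smul_eq_mul, ← exp_add]
  refine integrable_exp_of_le_sub_mul_sum_abs (s := s - |t|) (K := K) (by fun_prop)
    (sub_pos.2 (abs_lt.2 ht)) fun h => ?_
  have hsum : |h i| ≤ ∑ j, |h j| :=
    Finset.single_le_sum (f := fun j => |h j|) (fun j _ => abs_nonneg _) (Finset.mem_univ i)
  calc f h + t * h i ≤ K - s * ∑ j, |h j| + |t| * |h i| :=
        add_le_add (hle h) ((le_abs_self _).trans_eq (abs_mul _ _))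
    _ ≤ K - s * ∑ j, |h j| + |t| * ∑ j, |h j| := by gcongr
    _ = K - (s - |t|) * ∑ j, |h j| := by ring

variable {Ω : Type*} [MeasurableSpace Ω] {μ : Measure Ω} [IsFiniteMeasure μ]

open Asymptotics in
lemma integrable_comp_of_isBigO_top_pow {f : ℝ → ℝ} {n : ℕ} (hf : Continuous f)
    (hgrowth : f =O[⊤] fun x => (1 + |x|) ^ n) {X : Ω → ℝ} (hX : MemLp X n μ) :
    Integrable (fun ω => f (X ω)) μ := by
  obtain ⟨C, hC⟩ := isBigO_top.1 hgrowth
  have hbase : MemLp (fun ω => 1 + |X ω|) n μ := (memLp_const (1 : ℝ)).add hX.abs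
  have hpow : Integrable (fun ω => ‖1 + |X ω|‖ ^ n) μ := hbase.integrable_norm_pow'
  refine (hpow.const_mul C).mono' (hf.comp_aestronglyMeasurable hX.1) (ae_of_all _ fun ω => ?_)
  simpa only [norm_pow] using hC (X ω)

lemma integrable_comp_add_sub_comp {V : ℝ → ℝ} {L : ℝ≥0} (hV : ContDiff ℝ 2 V)
    (hL : LipschitzWith L (deriv (deriv V))) {X : Ω → ℝ} (hX : MemLp X 3 μ) (a : ℝ) :
    Integrable (fun ω => V (X ω + a) - V (X ω)) μ :=
  have hgrowth := isBigO_top_one_add_abs_pow_three hV hL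
  (integrable_comp_of_isBigO_top_pow hV.continuous hgrowth (hX.add (memLp_const a))).sub
    (integrable_comp_of_isBigO_top_pow hV.continuous hgrowth hX)

lemma integrable_comp_sub_comp_sub {V : ℝ → ℝ} {L : ℝ≥0} (hV : ContDiff ℝ 2 V)
    (hL : LipschitzWith L (deriv (deriv V))) {X : Ω → ℝ} (hX : MemLp X 3 μ) (a : ℝ) :
    Integrable (fun ω => V (X ω) - V (X ω - a)) μ :=
  have hgrowth := isBigO_top_one_add_abs_pow_three hV hL
  (integrable_comp_of_isBigO_top_pow hV.continuous hgrowth hX).sub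
    (integrable_comp_of_isBigO_top_pow hV.continuous hgrowth (hX.sub (memLp_const a)))

lemma abs_integral_fourPoint_sub_le {V : ℝ → ℝ} {L : ℝ≥0} (hV : ContDiff ℝ 2 V)
    (hL : LipschitzWith L (deriv (deriv V))) {X Y : Ω → ℝ} (hX : MemLp X 3 μ) (hY : MemLp Y 3 μ)
    (a : ℝ) :
    |∫ ω, (V (Y ω + a) - V (Y ω)) ∂μ - ∫ ω, (V (X ω) - V (X ω - a)) ∂μ
        - ∫ ω, deriv (deriv V) (X ω) * a * (a - (X ω - Y ω)) ∂μ|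
      ≤ 2 * L * ∫ ω, (|X ω - Y ω| ^ 2 + |a| ^ 2) * |a| ∂μ := by
  have hfourPoint : Integrable
      (fun ω => (V (Y ω + a) - V (Y ω)) - (V (X ω) - V (X ω - a))) μ :=
    (integrable_comp_add_sub_comp hV hL hY a).sub
      (integrable_comp_sub_comp_sub hV hL hX a)
  have hremainder : Integrable (fun ω => (|X ω - Y ω| ^ 2 + |a| ^ 2) * |a|) μ :=
    ((((hX.sub hY).mono_exponent (by norm_num)).integrable_norm_pow' (p := 2)).add
      (integrable_const _)).mul_const _
  have hmain : Integrable (fun ω => deriv (deriv V) (X ω) * a * (a - (X ω - Y ω))) μ := by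
    refine (hfourPoint.abs.add (hremainder.const_mul (2 * L))).mono'
      (((hL.continuous.comp_aestronglyMeasurable hX.1).mul_const a).mul
        (aestronglyMeasurable_const.sub (hX.1.sub hY.1))) (ae_of_all _ fun ω => ?_)
    have hle := abs_fourPoint_sub_le hV hL (X ω) (Y ω) a
    rw [abs_sub_comm] at hle
    exact sub_le_iff_le_add'.1 ((abs_sub_abs_le_abs_sub _ _).trans hle)
  rw [← integral_sub (integrable_comp_add_sub_comp hV hL hY a)
    (integrable_comp_sub_comp_sub hV hL hX a), ← integral_sub hfourPoint hmain,
    ← integral_const_mul]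
  exact abs_integral_le_integral_abs.trans (integral_mono (hfourPoint.sub hmain).abs
    (hremainder.const_mul _) fun ω => abs_fourPoint_sub_le hV hL (X ω) (Y ω) a)

end Moments

section Lattice

lemma edgesOf_finite (F : Finset Z2) : (edgesOf (F : Set Z2)).Finite := by
  have hsubset : edgesOf (F : Set Z2) ⊆ ⋃ e ∈ ({(1, 0), (0, 1)} : Set Z2),
      (fun x => (x, x + e)) '' F ∪ (fun y => (y - e, y)) '' F := by
    rintro ⟨x, y⟩ ⟨hxy | hxy, hx | hy⟩ <;> simp_all
  refine Set.Finite.subset ((Set.toFinite _).biUnion fun e _ => ?_) hsubset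
  exact (F.finite_toSet.image _).union (F.finite_toSet.image _)

/-- The edge set `F*` of a finite set `F` as a `Finset`, which turns the `finsum` over
`edgesOf F` in the energy into a finite sum. -/
def edgeFinset (F : Finset Z2) : Finset (Z2 × Z2) := (edgesOf_finite F).toFinset

lemma mem_edgeFinset {F : Finset Z2} {b : Z2 × Z2} :
    b ∈ edgeFinset F ↔ b ∈ edgesOf (F : Set Z2) :=
  (edgesOf_finite F).mem_toFinset

lemma finsum_mem_edgesOf_eq_sum (F : Finset Z2) (f : Z2 × Z2 → ℝ) :
    ∑ᶠ b ∈ edgesOf (F : Set Z2), f b = ∑ b ∈ edgeFinset F, f b :=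
  finsum_mem_eq_finite_toFinset_sum f (edgesOf_finite F)

lemma glEnergy_eq_sum (V : ℝ → ℝ) (F : Finset Z2) (φ : Z2 → ℝ) (h : ↥F → ℝ) :
    glEnergy V F φ h = ∑ b ∈ edgeFinset F, V (grad (vee F h φ) b) :=
  finsum_mem_edgesOf_eq_sum F _

lemma adjZ_of_mem_edgesOf {D : Set Z2} {b : Z2 × Z2} (hb : b ∈ edgesOf D) :
    adjZ b.1 b.2 ∧ adjZ b.2 b.1 := by
  rcases hb with ⟨hb | hb, -⟩ <;> simp [adjZ, hb]

lemma mem_or_mem_bdry_of_mem_edgesOf {D : Set Z2} {b : Z2 × Z2} (hb : b ∈ edgesOf D) :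
    (b.1 ∈ D ∨ b.1 ∈ bdry D) ∧ (b.2 ∈ D ∨ b.2 ∈ bdry D) := by
  obtain ⟨hadj, hadj'⟩ := adjZ_of_mem_edgesOf hb
  rcases hb.2 with h1 | h2
  · exact ⟨.inl h1, or_iff_not_imp_left.2 fun h2 => ⟨h2, b.1, h1, hadj'⟩⟩
  · exact ⟨or_iff_not_imp_left.2 fun h1 => ⟨h1, b.2, h2, hadj⟩, .inl h2⟩

lemma grad_sub (u w : Z2 → ℝ) (b : Z2 × Z2) :
    grad (fun z => u z - w z) b = grad u b - grad w b :=
  sub_sub_sub_comm _ _ _ _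

variable {F : Finset Z2} {ζ ζt g : Z2 → ℝ}

lemma vee_add (hg : ∀ x ∈ bdry (F : Set Z2), g x = ζ x - ζt x) (k : ↥F → ℝ) {x : Z2}
    (hx : x ∈ F ∨ x ∈ bdry (F : Set Z2)) :
    vee F (fun x => k x + g x) ζ x = vee F k ζt x + g x := by
  rcases hx with hx | hx
  · simp only [vee, hx, dite_true]
  · have hxF : x ∉ F := hx.1
    simp only [vee, hxF, dite_false, hg x hx, add_sub_cancel]

lemma grad_vee_add (hg : ∀ x ∈ bdry (F : Set Z2), g x = ζ x - ζt x) (k : ↥F → ℝ) {b : Z2 × Z2}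
    (hb : b ∈ edgeFinset F) :
    grad (vee F (fun x => k x + g x) ζ) b = grad (vee F k ζt) b + grad g b := by
  obtain ⟨h1, h2⟩ := mem_or_mem_bdry_of_mem_edgesOf (mem_edgeFinset.1 hb)
  simp only [grad, vee_add hg k h1, vee_add hg k h2]
  ring

lemma grad_vee_sub (hg : ∀ x ∈ bdry (F : Set Z2), g x = ζ x - ζt x) (h : ↥F → ℝ) {b : Z2 × Z2}
    (hb : b ∈ edgeFinset F) :
    grad (vee F (fun x => h x - g x) ζt) b = grad (vee F h ζ) b - grad g b := by
  rw [eq_sub_iff_add_eq, ← grad_vee_add hg _ hb]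
  simp only [sub_add_cancel]

lemma exists_add_nsmul_notMem (F : Finset Z2) (x : Z2) : ∃ n : ℕ, x + n • ((1, 0) : Z2) ∉ F := by
  by_contra! hmem
  refine Set.infinite_of_injective_forall_mem (fun m n hmn => ?_) hmem F.finite_toSet
  simpa using hmn

/-- The walk from `x` in direction `(1, 0)` up to its exit from `F` uses each edge of `F*` at most
once. -/
lemma exists_notMem_forall_abs_le_add_sum_abs_grad (F : Finset Z2) (x : Z2) :
    ∃ y ∉ F, ∀ u : Z2 → ℝ, |u x| ≤ |u y| + ∑ b ∈ edgeFinset F, |grad u b| := by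
  have hexit := exists_add_nsmul_notMem F x
  set n := Nat.find hexit
  let p : ℕ → Z2 := fun i => x + i • ((1, 0) : Z2)
  have hinj : Set.InjOn (fun i => (p i, p (i + 1))) (Finset.range n) := fun i _ j _ hij => by
    simpa [p] using congrArg Prod.fst hij
  have hedge : (Finset.range n).image (fun i => (p i, p (i + 1))) ⊆ edgeFinset F := by
    refine Finset.image_subset_iff.2 fun i hi => mem_edgeFinset.2 ⟨.inl ?_, .inl ?_⟩
    · simp only [p, succ_nsmul, add_assoc]
    · exact not_not.1 (Nat.find_min hexit (Finset.mem_range.1 hi))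
  refine ⟨p n, Nat.find_spec hexit, fun u => ?_⟩
  have hx : p 0 = x := by simp [p]
  calc |u x| = |u (p 0)| := by rw [hx]
    _ ≤ |u (p n)| + |u (p 0) - u (p n)| := by
        linarith [abs_sub_abs_le_abs_sub (u (p 0)) (u (p n))]
    _ ≤ |u (p n)| + ∑ i ∈ Finset.range n, |grad u (p i, p (i + 1))| := by
        gcongr
        simpa only [Real.dist_eq, grad, abs_sub_comm] using
          dist_le_range_sum_dist (fun i => u (p i)) n
    _ ≤ |u (p n)| + ∑ b ∈ edgeFinset F, |grad u b| := by
        rw [← Finset.sum_image (f := fun b => |grad u b|) hinj]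
        gcongr

lemma exists_forall_sum_abs_le_add_mul_sum_abs_grad (F : Finset Z2) (φ : Z2 → ℝ) :
    ∃ B, ∀ h : ↥F → ℝ,
      ∑ x, |h x| ≤ B + F.card * ∑ b ∈ edgeFinset F, |grad (vee F h φ) b| := by
  choose y hy hle using fun x : ↥F => exists_notMem_forall_abs_le_add_sum_abs_grad F x
  refine ⟨∑ x, |φ (y x)|, fun h => ?_⟩
  calc ∑ x, |h x|
      ≤ ∑ x : ↥F, (|φ (y x)| + ∑ b ∈ edgeFinset F, |grad (vee F h φ) b|) :=
        Finset.sum_le_sum fun x _ => by simpa [vee, hy x] using hle x (vee F h φ)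
    _ = _ := by simp [Finset.sum_add_distrib]

lemma exists_forall_neg_glEnergy_le_sub_mul_sum_abs {V : ℝ → ℝ} {a K : ℝ} (ha : 0 < a)
    (hgrowth : ∀ x, a * |x| - K ≤ V x) (F : Finset Z2) (φ : Z2 → ℝ) :
    ∃ s > 0, ∃ K', ∀ h : ↥F → ℝ, -glEnergy V F φ h ≤ K' - s * ∑ x, |h x| := by
  obtain ⟨B, hB⟩ := exists_forall_sum_abs_le_add_mul_sum_abs_grad F φ
  set s := a / (F.card + 1)
  have hs : 0 < s := by positivity
  refine ⟨s, hs, s * B + (edgeFinset F).card * K, fun h => ?_⟩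
  set S := ∑ b ∈ edgeFinset F, |grad (vee F h φ) b|
  have henergy : a * S - (edgeFinset F).card * K ≤ glEnergy V F φ h := by
    rw [glEnergy_eq_sum, Finset.mul_sum, ← nsmul_eq_mul, ← Finset.sum_const,
      ← Finset.sum_sub_distrib]
    exact Finset.sum_le_sum fun b _ => hgrowth _
  have hsum : s * ∑ x, |h x| ≤ s * B + a * S := by
    have hS : 0 ≤ S := Finset.sum_nonneg fun b _ => abs_nonneg _
    calc s * ∑ x, |h x| ≤ s * (B + (F.card + 1) * S) := by
          gcongr
          linarith [hB h]
      _ = s * B + a * S := by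
          simp only [s]
          field_simp
  linarith

lemma continuous_grad_vee (F : Finset Z2) (φ : Z2 → ℝ) (b : Z2 × Z2) :
    Continuous fun h : ↥F → ℝ => grad (vee F h φ) b := by
  have hvee : ∀ x, Continuous fun h : ↥F → ℝ => vee F h φ x := fun x => by
    by_cases hx : x ∈ F <;> simp only [vee, hx, dite_true, dite_false] <;> fun_prop
  exact (hvee _).sub (hvee _)

lemma continuous_glEnergy {V : ℝ → ℝ} (hV : Continuous V) (F : Finset Z2) (φ : Z2 → ℝ) :
    Continuous (glEnergy V F φ) := by
  rw [funext (glEnergy_eq_sum V F φ)]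
  exact continuous_finsetSum _ fun b _ => hV.comp (continuous_grad_vee F φ b)

end Lattice

section GinzburgLandau

lemma IsCoupling.integral_fst {α : Type*} [MeasurableSpace α] {μ : Measure (α × α)}
    {P Q : Measure α} (hμ : IsCoupling μ P Q) {f : α → ℝ} (hf : AEStronglyMeasurable f P) :
    ∫ x, f x ∂P = ∫ ω, f ω.1 ∂μ := by
  obtain ⟨-, rfl, -⟩ := hμ
  exact integral_map measurable_fst.aemeasurable hf

lemma IsCoupling.integral_snd {α : Type*} [MeasurableSpace α] {μ : Measure (α × α)}
    {P Q : Measure α} (hμ : IsCoupling μ P Q) {f : α → ℝ} (hf : AEStronglyMeasurable f Q) :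
    ∫ x, f x ∂Q = ∫ ω, f ω.2 ∂μ := by
  obtain ⟨-, -, rfl⟩ := hμ
  exact integral_map measurable_snd.aemeasurable hf

lemma IsCoupling.abs_integral_sub_integral_sub_le {α : Type*} [MeasurableSpace α]
    {μ : Measure (α × α)} {P Q : Measure α} [IsFiniteMeasure P] [IsFiniteMeasure Q]
    (hμ : IsCoupling μ P Q) {V : ℝ → ℝ} {L : ℝ≥0} (hV : ContDiff ℝ 2 V)
    (hL : LipschitzWith L (deriv (deriv V))) {X Y : α → ℝ} (hX : MemLp X 3 P) (hY : MemLp Y 3 Q)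
    (a : ℝ) :
    |∫ y, (V (Y y + a) - V (Y y)) ∂Q - ∫ x, (V (X x) - V (X x - a)) ∂P
        - ∫ ω, deriv (deriv V) (X ω.1) * a * (a - (X ω.1 - Y ω.2)) ∂μ|
      ≤ 2 * L * ∫ ω, (|X ω.1 - Y ω.2| ^ 2 + |a| ^ 2) * |a| ∂μ := by
  have := hμ.1
  rw [hμ.integral_snd (integrable_comp_add_sub_comp hV hL hY a).aestronglyMeasurable,
    hμ.integral_fst (integrable_comp_sub_comp_sub hV hL hX a).aestronglyMeasurable]
  exact abs_integral_fourPoint_sub_le hV hL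
    (hX.comp_measurePreserving ⟨measurable_fst, hμ.2.1⟩)
    (hY.comp_measurePreserving ⟨measurable_snd, hμ.2.2⟩) a

variable {V : ℝ → ℝ} {a K : ℝ} {F : Finset Z2} {φ : Z2 → ℝ} {P : Measure (↥F → ℝ)}

lemma integrable_exp_neg_glEnergy (hV : Continuous V) (ha : 0 < a)
    (hgrowth : ∀ x, a * |x| - K ≤ V x) (F : Finset Z2) (φ : Z2 → ℝ) :
    Integrable fun h => exp (-glEnergy V F φ h) := by
  obtain ⟨s, hs, K', hle⟩ := exists_forall_neg_glEnergy_le_sub_mul_sum_abs ha hgrowth F φ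
  exact integrable_exp_of_le_sub_mul_sum_abs (continuous_glEnergy hV F φ).neg.measurable hs hle

lemma IsGL.eq_tilted (hP : IsGL V F φ P) (hV : Continuous V) (ha : 0 < a)
    (hgrowth : ∀ x, a * |x| - K ≤ V x) :
    P = (volume : Measure (↥F → ℝ)).tilted fun h => -glEnergy V F φ h := by
  obtain ⟨_, c, -, -, hc⟩ := hP
  exact eq_tilted_of_eq_smul_withDensity (integrable_exp_neg_glEnergy hV ha hgrowth F φ) hc

lemma IsGL.memLp_grad (hP : IsGL V F φ P) (hV : Continuous V) (ha : 0 < a)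
    (hgrowth : ∀ x, a * |x| - K ≤ V x) (b : Z2 × Z2) (p : ℝ≥0) :
    MemLp (fun h => grad (vee F h φ) b) p P := by
  have := hP.1
  obtain ⟨s, hs, K', hle⟩ := exists_forall_neg_glEnergy_le_sub_mul_sum_abs ha hgrowth F φ
  have heval : ∀ x : ↥F, MemLp (fun h : ↥F → ℝ => h x) p P := fun x => by
    rw [hP.eq_tilted hV ha hgrowth]
    exact memLp_eval_tilted (continuous_glEnergy hV F φ).neg.measurable hs hle x p
  have hvee : ∀ x, MemLp (fun h : ↥F → ℝ => vee F h φ x) p P := fun x => by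
    by_cases hx : x ∈ F <;> simp only [vee, hx, dite_true, dite_false]
    exacts [heval _, memLp_const _]
  exact (hvee _).sub (hvee _)

variable {ζ ζt g : Z2 → ℝ} {Pt : Measure (↥F → ℝ)}

lemma glEnergy_add_sub_glEnergy (V : ℝ → ℝ) (hg : ∀ x ∈ bdry (F : Set Z2), g x = ζ x - ζt x)
    (k : ↥F → ℝ) :
    glEnergy V F ζ (fun x => k x + g x) - glEnergy V F ζt k
      = ∑ b ∈ edgeFinset F, (V (grad (vee F k ζt) b + grad g b) - V (grad (vee F k ζt) b)) := by
  rw [glEnergy_eq_sum, glEnergy_eq_sum, ← Finset.sum_sub_distrib]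
  exact Finset.sum_congr rfl fun b hb => by rw [grad_vee_add hg k hb]

lemma glEnergy_sub_glEnergy_sub (V : ℝ → ℝ) (hg : ∀ x ∈ bdry (F : Set Z2), g x = ζ x - ζt x)
    (h : ↥F → ℝ) :
    glEnergy V F ζ h - glEnergy V F ζt (fun x => h x - g x)
      = ∑ b ∈ edgeFinset F, (V (grad (vee F h ζ) b) - V (grad (vee F h ζ) b - grad g b)) := by
  rw [glEnergy_eq_sum, glEnergy_eq_sum, ← Finset.sum_sub_distrib]
  exact Finset.sum_congr rfl fun b hb => by rw [grad_vee_sub hg h hb]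

lemma IsGL.KLr_add_KLr_map_sub {L : ℝ≥0} (hP : IsGL V F ζ P) (hPt : IsGL V F ζt Pt) (ha : 0 < a)
    (hV : ContDiff ℝ 2 V) (hgrowth : ∀ x, a * |x| - K ≤ V x)
    (hL : LipschitzWith L (deriv (deriv V)))
    (hg : ∀ x ∈ bdry (F : Set Z2), g x = ζ x - ζt x) :
    KLr Pt (P.map fun h => fun x : ↥F => h x - g x)
        + KLr (P.map fun h => fun x : ↥F => h x - g x) Pt
      = ∑ b ∈ edgeFinset F,
        (∫ k, (V (grad (vee F k ζt) b + grad g b) - V (grad (vee F k ζt) b)) ∂Pt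
          - ∫ h, (V (grad (vee F h ζ) b) - V (grad (vee F h ζ) b - grad g b)) ∂P) := by
  have := hP.1
  have := hPt.1
  have hint : ∀ b, Integrable
      (fun h => V (grad (vee F h ζ) b) - V (grad (vee F h ζ) b - grad g b)) P := fun b =>
    integrable_comp_sub_comp_sub hV hL (hP.memLp_grad hV.continuous ha hgrowth b 3) _
  have hintt : ∀ b, Integrable
      (fun k => V (grad (vee F k ζt) b + grad g b) - V (grad (vee F k ζt) b)) Pt := fun b =>
    integrable_comp_add_sub_comp hV hL (hPt.memLp_grad hV.continuous ha hgrowth b 3) _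
  have htilt := hP.eq_tilted hV.continuous ha hgrowth
  have htiltt := hPt.eq_tilted hV.continuous ha hgrowth
  have hKL := KLr_add_KLr_map_sub_right_tilted
    (integrable_exp_neg_glEnergy hV.continuous ha hgrowth F ζ)
    (integrable_exp_neg_glEnergy hV.continuous ha hgrowth F ζt) fun x => g x
  rw [← htilt, ← htiltt] at hKL
  have hsub := glEnergy_sub_glEnergy_sub V hg
  have hadd := glEnergy_add_sub_glEnergy V hg
  simp only [Pi.sub_def, Pi.add_def, hsub, hadd] at hKL
  rw [hKL (integrable_finsetSum _ fun b _ => hint b) (integrable_finsetSum _ fun b _ => hintt b),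
    integral_finsetSum _ fun b _ => hint b, integral_finsetSum _ fun b _ => hintt b,
    Finset.sum_sub_distrib]

end GinzburgLandau

theorem symmetrized_relative_entropy_general {V : ℝ → ℝ} {L : ℝ≥0} {a K : ℝ} (ha : 0 < a)
    (hV : ContDiff ℝ 2 V) (hgrowth : ∀ x, a * |x| - K ≤ V x)
    (hL : LipschitzWith L (deriv (deriv V))) {F : Finset Z2} {ζ ζt g : Z2 → ℝ}
    (hg : ∀ x ∈ bdry (F : Set Z2), g x = ζ x - ζt x) {Q P Pt : Measure (↥F → ℝ)}
    (hP : IsGL V F ζ P) (hPt : IsGL V F ζt Pt)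
    (hQ : Q = P.map (fun h => fun x : ↥F => h x - g ↑x))
    {μ : Measure ((↥F → ℝ) × (↥F → ℝ))} (hμ : IsCoupling μ P Pt) :
    |KLr Pt Q + KLr Q Pt -
        ∑ᶠ b ∈ edgesOf (F : Set Z2),
          ∫ ω, deriv (deriv V) (grad (vee F ω.1 ζ) b) * grad g b *
            (grad g b - grad (fun z => vee F ω.1 ζ z - vee F ω.2 ζt z) b) ∂μ|
      ≤ 2 * L * ∑ᶠ b ∈ edgesOf (F : Set Z2),
          ∫ ω, (|grad (fun z => vee F ω.1 ζ z - vee F ω.2 ζt z) b| ^ 2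
              + |grad g b| ^ 2) * |grad g b| ∂μ := by
  have := hP.1
  have := hPt.1
  simp only [grad_sub]
  rw [hQ, hP.KLr_add_KLr_map_sub hPt ha hV hgrowth hL hg, finsum_mem_edgesOf_eq_sum,
    finsum_mem_edgesOf_eq_sum, ← Finset.sum_sub_distrib, Finset.mul_sum]
  refine (Finset.abs_sum_le_sum_abs _ _).trans (Finset.sum_le_sum fun b _ => ?_)
  exact hμ.abs_integral_sub_integral_sub_le hV hL
    (hP.memLp_grad hV.continuous ha hgrowth b 3) (hPt.memLp_grad hV.continuous ha hgrowth b 3) _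

/-- Symmetrized relative entropy formula.
There is `C > 0` depending only on `A_V` and the Lipschitz constant `L` of `V''` such that:
for finite `F ⊆ ℤ²`, boundary data `ζ, ζ̃`, any `g` with `g = ζ − ζ̃` on `∂F`, `Q` the law of
`h^ζ − g`, and any coupling `μ` of `(P_F^ζ, P_F^ζ̃)`, the symmetrized entropy
`KL(P^ζ̃‖Q) + KL(Q‖P^ζ̃)` equals `Σ_{b∈F*} E_μ[V''(∇(h^ζ∨ζ)(b)) ∇g(b) ∇(g−h̄)(b)]` up to an
error at most `C Σ_{b∈F*} E_μ[(|∇h̄(b)|² + |∇g(b)|²)|∇g(b)|]`. -/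
theorem symmetrized_relative_entropy (AV : ℝ) (L : ℝ≥0) :
    ∃ C : ℝ, 0 < C ∧
      ∀ (V : ℝ → ℝ) (aV : ℝ), 0 < aV →
        ContDiff ℝ 2 V → (∀ x, V (-x) = V x) →
        (∀ x, aV ≤ deriv (deriv V) x) → (∀ x, deriv (deriv V) x ≤ AV) →
        LipschitzWith L (deriv (deriv V)) →
      ∀ (F : Finset Z2) (ζ ζt g : Z2 → ℝ),
        (∀ x ∈ bdry (F : Set Z2), g x = ζ x - ζt x) →
      ∀ Q P Pt : Measure (↥F → ℝ),
        IsGL V F ζ P → IsGL V F ζt Pt →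
        Q = P.map (fun h => fun x : ↥F => h x - g ↑x) →
      ∀ μ : Measure ((↥F → ℝ) × (↥F → ℝ)), IsCoupling μ P Pt →
        |KLr Pt Q + KLr Q Pt -
            ∑ᶠ b ∈ edgesOf (F : Set Z2),
              ∫ ω, deriv (deriv V) (grad (vee F ω.1 ζ) b) * grad g b *
                (grad g b - grad (fun z => vee F ω.1 ζ z - vee F ω.2 ζt z) b) ∂μ|
          ≤ C * ∑ᶠ b ∈ edgesOf (F : Set Z2),
              ∫ ω, (|grad (fun z => vee F ω.1 ζ z - vee F ω.2 ζt z) b| ^ 2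
                  + |grad g b| ^ 2) * |grad g b| ∂μ :=
  ⟨2 * (L + 1 : ℝ≥0), by positivity, fun V _ ha hV _ hle _ hL _ _ _ _ hg _ _ _ hP hPt hQ _ hμ =>
    have ⟨_, hK⟩ := exists_forall_mul_abs_sub_le_of_le_deriv2 ha hV hle 1
    symmetrized_relative_entropy_general one_pos hV hK (hL.weaken le_self_add) hg hP hPt hQ hμ⟩

end
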